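/- arXiv:2605.18213 — 6 statements merged into one kernel-verified Lean document; each statement's English description precedes it below -/
import Mathlib

section
/- Let g be a Lie algebra over ℝ, let β ≠ 0 be a real number, and let a₊, a₋, b₊, b₋, c₀, c₁ be elements of g satisfying ⁅a₊, a₋⁆ = ⁅b₊, b₋⁆ and ⁅a₊, b₋⁆ = ⁅b₊, a₋⁆. Define j1₊ := a₊ + (1/(2β))·⁅b₊, c₀⁆, j1₋ := −a₋ + (1/(2β))·⁅b₋, c₀⁆, j2₊ := b₊ + (1/(2β))·⁅a₊, c₀⁆ + ⁅b₊, c₁⁆, and j2₋ := b₋ − (1/(2β))·⁅a₋, c₀⁆ + ⁅b₋, c₁⁆. Then the obstruction X⁽²⁾ vanishes: ⁅a₊, j1₋⁆ + ⁅a₋, j1₊⁆ + ⁅b₊, j2₋⁆ − ⁅b₋, j2₊⁆ + ⁅c₁, ⁅a₊, a₋⁆⁆ = 0. (This is the lightcone-component form of the identity X⁽²⁾ = [⋆A, J⁽¹⁾] + [B, J⁽²⁾] + ½[χ⁽¹⁾, [A, A]] = 0 used in the proof of the generalised BIZZ theorem.) -/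
/-!
Since `t • ⁅x, c⁆ = ⁅x, t • c⁆`, the coefficient `1 / (2β)` can be absorbed into `c₀`, so the
identity lives in an arbitrary Lie ring. There `X⁽²⁾` splits into a part free of the potentials, a
part linear in `c₀` and a part linear in `c₁`. With `d = ⁅b₊, b₋⁆ - ⁅a₊, a₋⁆`, the first is `2 d`,
and by the Jacobi identity the other two are `⁅⁅a₊, b₋⁆ - ⁅b₊, a₋⁆, c₀⁆` and `⁅d, c₁⁆`.
-/

theorem lie_lie_sub_lie_lie_eq_of_lie_eq {L M : Type*} [LieRing L] [AddCommGroup M]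
    [LieRingModule L M] {x y z w : L} (h : ⁅x, y⁆ = ⁅z, w⁆) (m : M) :
    ⁅x, ⁅y, m⁆⁆ - ⁅y, ⁅x, m⁆⁆ = ⁅z, ⁅w, m⁆⁆ - ⁅w, ⁅z, m⁆⁆ := by
  rw [← lie_lie, h, lie_lie]

theorem X2_vanishes_general {L : Type*} [LieRing L] {ap am bp bm c0 c1 j1p j1m j2p j2m : L}
    (h1 : ⁅ap, am⁆ = ⁅bp, bm⁆) (h2 : ⁅ap, bm⁆ = ⁅bp, am⁆)
    (hj1p : j1p = ap + ⁅bp, c0⁆) (hj1m : j1m = -am + ⁅bm, c0⁆)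
    (hj2p : j2p = bp + ⁅ap, c0⁆ + ⁅bp, c1⁆) (hj2m : j2m = bm - ⁅am, c0⁆ + ⁅bm, c1⁆) :
    ⁅ap, j1m⁆ + ⁅am, j1p⁆ + ⁅bp, j2m⁆ - ⁅bm, j2p⁆ + ⁅c1, ⁅ap, am⁆⁆ = 0 := by
  have potential_free : -⁅ap, am⁆ + ⁅am, ap⁆ + ⁅bp, bm⁆ - ⁅bm, bp⁆ = 0 := by
    rw [← lie_skew am ap, ← lie_skew bm bp, h1]
    abel
  have c0_part : (⁅ap, ⁅bm, c0⁆⁆ - ⁅bm, ⁅ap, c0⁆⁆) - (⁅bp, ⁅am, c0⁆⁆ - ⁅am, ⁅bp, c0⁆⁆) = 0 :=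
    sub_eq_zero.mpr (lie_lie_sub_lie_lie_eq_of_lie_eq h2 c0)
  have c1_part : ⁅bp, ⁅bm, c1⁆⁆ - ⁅bm, ⁅bp, c1⁆⁆ + ⁅c1, ⁅ap, am⁆⁆ = 0 := by
    rw [← lie_lie, h1, ← lie_skew, neg_add_cancel]
  calc ⁅ap, j1m⁆ + ⁅am, j1p⁆ + ⁅bp, j2m⁆ - ⁅bm, j2p⁆ + ⁅c1, ⁅ap, am⁆⁆
    _ = (-⁅ap, am⁆ + ⁅am, ap⁆ + ⁅bp, bm⁆ - ⁅bm, bp⁆) +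
        ((⁅ap, ⁅bm, c0⁆⁆ - ⁅bm, ⁅ap, c0⁆⁆) - (⁅bp, ⁅am, c0⁆⁆ - ⁅am, ⁅bp, c0⁆⁆)) +
        (⁅bp, ⁅bm, c1⁆⁆ - ⁅bm, ⁅bp, c1⁆⁆ + ⁅c1, ⁅ap, am⁆⁆) := by
      simp only [hj1p, hj1m, hj2p, hj2m, lie_add, lie_sub, lie_neg]
      abel
    _ = 0 := by rw [potential_free, c0_part, c1_part, add_zero, add_zero]

/-- Vanishing of the obstruction `X⁽²⁾` in the proof of the generalised BIZZ theorem,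
in lightcone components. -/
theorem X2_vanishes
    {g : Type*} [LieRing g] [LieAlgebra ℝ g]
    (β : ℝ) (hβ : β ≠ 0)
    (ap am bp bm c0 c1 : g)
    (h1 : ⁅ap, am⁆ = ⁅bp, bm⁆)
    (h2 : ⁅ap, bm⁆ = ⁅bp, am⁆)
    (j1p j1m j2p j2m : g)
    (hj1p : j1p = ap + (1 / (2 * β)) • ⁅bp, c0⁆)
    (hj1m : j1m = -am + (1 / (2 * β)) • ⁅bm, c0⁆)
    (hj2p : j2p = bp + (1 / (2 * β)) • ⁅ap, c0⁆ + ⁅bp, c1⁆)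
    (hj2m : j2m = bm - (1 / (2 * β)) • ⁅am, c0⁆ + ⁅bm, c1⁆) :
    ⁅ap, j1m⁆ + ⁅am, j1p⁆ + ⁅bp, j2m⁆ - ⁅bm, j2p⁆ + ⁅c1, ⁅ap, am⁆⁆ = 0 := by
  rw [← lie_smul] at hj1p hj1m hj2p hj2m
  exact X2_vanishes_general h1 h2 hj1p hj1m hj2p hj2m
end

section
/- Let g be a Lie algebra over ℝ, let β ≠ 0 be a real number, and let a₊, a₋, b₊, b₋, c₀, c₁, c₂ be elements of g satisfying ⁅a₊, a₋⁆ = ⁅b₊, b₋⁆ and ⁅a₊, b₋⁆ = ⁅b₊, a₋⁆. Define j1₊ := a₊ + (1/(2β))·⁅b₊, c₀⁆, j1₋ := −a₋ + (1/(2β))·⁅b₋, c₀⁆, j2₊ := b₊ + (1/(2β))·⁅a₊, c₀⁆ + ⁅b₊, c₁⁆, j2₋ := b₋ − (1/(2β))·⁅a₋, c₀⁆ + ⁅b₋, c₁⁆, j3₊ := j1₊ + ⁅a₊, c₁⁆ + ⁅b₊, c₂⁆, and j3₋ := j1₋ − ⁅a₋, c₁⁆ + ⁅b₋, c₂⁆.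 Then the obstruction X⁽³⁾ vanishes: ⁅a₊, j2₋⁆ + ⁅a₋, j2₊⁆ + ⁅b₊, j3₋⁆ − ⁅b₋, j3₊⁆ + ⁅c₂, ⁅a₊, a₋⁆⁆ = 0. (This is the lightcone-component form of the identity X⁽³⁾ = [⋆A, J⁽²⁾] + [B, J⁽³⁾] + ½[χ⁽²⁾, [A, A]] = 0 used in the proof of the generalised BIZZ theorem.) -/
theorem lie_sub_lie_swap_eq_of_lie_eq {L : Type*} [LieRing L] {x y z w : L}
    (h : ⁅x, y⁆ = ⁅z, w⁆) : ⁅x, y⁆ - ⁅y, x⁆ = ⁅z, w⁆ - ⁅w, z⁆ := by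
  rw [← lie_skew y x, ← lie_skew w z, h]

theorem X3_vanishes_general {L : Type*} [LieRing L] (ap am bp bm c0 c1 c2 : L)
    (haa : ⁅ap, am⁆ = ⁅bp, bm⁆) (hab : ⁅ap, bm⁆ = ⁅bp, am⁆) :
    ⁅ap, bm - ⁅am, c0⁆ + ⁅bm, c1⁆⁆ + ⁅am, bp + ⁅ap, c0⁆ + ⁅bp, c1⁆⁆
      + ⁅bp, -am + ⁅bm, c0⁆ - ⁅am, c1⁆ + ⁅bm, c2⁆⁆
      - ⁅bm, ap + ⁅bp, c0⁆ + ⁅ap, c1⁆ + ⁅bp, c2⁆⁆ + ⁅c2, ⁅ap, am⁆⁆ = 0 := by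
  have free_part : (⁅ap, bm⁆ - ⁅bm, ap⁆) - (⁅bp, am⁆ - ⁅am, bp⁆) = 0 :=
    sub_eq_zero.mpr (lie_sub_lie_swap_eq_of_lie_eq hab)
  have c0_part : (⁅bp, ⁅bm, c0⁆⁆ - ⁅bm, ⁅bp, c0⁆⁆) - (⁅ap, ⁅am, c0⁆⁆ - ⁅am, ⁅ap, c0⁆⁆) = 0 :=
    sub_eq_zero.mpr (lie_lie_sub_lie_lie_eq_of_lie_eq haa.symm c0)
  have c1_part : (⁅ap, ⁅bm, c1⁆⁆ - ⁅bm, ⁅ap, c1⁆⁆) - (⁅bp, ⁅am, c1⁆⁆ - ⁅am, ⁅bp, c1⁆⁆) = 0 :=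
    sub_eq_zero.mpr (lie_lie_sub_lie_lie_eq_of_lie_eq hab c1)
  have c2_part : (⁅bp, ⁅bm, c2⁆⁆ - ⁅bm, ⁅bp, c2⁆⁆) + ⁅c2, ⁅ap, am⁆⁆ = 0 := by
    rw [← lie_lie, haa, ← lie_skew c2, add_neg_cancel]
  calc
    _ = ((⁅ap, bm⁆ - ⁅bm, ap⁆) - (⁅bp, am⁆ - ⁅am, bp⁆))
        + ((⁅bp, ⁅bm, c0⁆⁆ - ⁅bm, ⁅bp, c0⁆⁆) - (⁅ap, ⁅am, c0⁆⁆ - ⁅am, ⁅ap, c0⁆⁆))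
        + ((⁅ap, ⁅bm, c1⁆⁆ - ⁅bm, ⁅ap, c1⁆⁆) - (⁅bp, ⁅am, c1⁆⁆ - ⁅am, ⁅bp, c1⁆⁆))
        + ((⁅bp, ⁅bm, c2⁆⁆ - ⁅bm, ⁅bp, c2⁆⁆) + ⁅c2, ⁅ap, am⁆⁆) := by
      simp only [lie_add, lie_sub, lie_neg]
      abel
    _ = 0 := by simp only [free_part, c0_part, c1_part, c2_part, add_zero]

/-- Vanishing of the obstruction `X⁽³⁾` in the proof of the generalised BIZZ theorem,
in lightcone components. -/
theorem X3_vanishes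
    {g : Type*} [LieRing g] [LieAlgebra ℝ g]
    (β : ℝ) (hβ : β ≠ 0)
    (ap am bp bm c0 c1 c2 : g)
    (h1 : ⁅ap, am⁆ = ⁅bp, bm⁆)
    (h2 : ⁅ap, bm⁆ = ⁅bp, am⁆)
    (j1p j1m j2p j2m j3p j3m : g)
    (hj1p : j1p = ap + (1 / (2 * β)) • ⁅bp, c0⁆)
    (hj1m : j1m = -am + (1 / (2 * β)) • ⁅bm, c0⁆)
    (hj2p : j2p = bp + (1 / (2 * β)) • ⁅ap, c0⁆ + ⁅bp, c1⁆)
    (hj2m : j2m = bm - (1 / (2 * β)) • ⁅am, c0⁆ + ⁅bm, c1⁆)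
    (hj3p : j3p = j1p + ⁅ap, c1⁆ + ⁅bp, c2⁆)
    (hj3m : j3m = j1m - ⁅am, c1⁆ + ⁅bm, c2⁆) :
    ⁅ap, j2m⁆ + ⁅am, j2p⁆ + ⁅bp, j3m⁆ - ⁅bm, j3p⁆ + ⁅c2, ⁅ap, am⁆⁆ = 0 := by
  simp only [hj3p, hj3m, hj2p, hj2m, hj1p, hj1m, ← lie_smul]
  exact X3_vanishes_general ap am bp bm ((1 / (2 * β)) • c0) c1 c2 h1 h2
end

section
/- Let g be a Lie algebra over a commutative ring and let a₊, a₋, b₊, b₋ be elements of g satisfying ⁅a₊, a₋⁆ = ⁅b₊, b₋⁆ and ⁅a₊, b₋⁆ = ⁅b₊, a₋⁆. For elements p₊, p₋, q₊, q₋, u of g define X(p₊, p₋, q₊, q₋, u) := ⁅a₊, p₋⁆ + ⁅a₋, p₊⁆ + ⁅b₊, q₋⁆ − ⁅b₋, q₊⁆ + ⁅u, ⁅a₊, a₋⁆⁆. Given further elements c, c', c'' of g, define r₊ := p₊ + ⁅a₊, c⁆ + ⁅b₊, c'⁆, r₋ := p₋ − ⁅a₋, c⁆ + ⁅b₋, c'⁆,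 s₊ := q₊ + ⁅a₊, c'⁆ + ⁅b₊, c''⁆, and s₋ := q₋ − ⁅a₋, c'⁆ + ⁅b₋, c''⁆. Then X(r₊, r₋, s₊, s₋, c'') = X(p₊, p₋, q₊, q₋, c). (This is the lightcone-component form of the recursion X⁽ⁿ⁺¹⁾ = X⁽ⁿ⁻¹⁾ satisfied by the conservation obstructions of the generalised BIZZ currents for n ≥ 3.) -/
/-!
The Jacobi identity `⁅x, ⁅y, m⁆⁆ - ⁅y, ⁅x, m⁆⁆ = ⁅⁅x, y⁆, m⁆` turns the contributions of the three
potentials to the obstruction of the next currents into single brackets: `c` contributes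
`-⁅⁅a₊, a₋⁆, c⁆`, which is the potential term of the old obstruction; `c'` contributes
`⁅⁅a₊, b₋⁆ - ⁅b₊, a₋⁆, c'⁆`; and `c''` contributes `⁅⁅b₊, b₋⁆ - ⁅a₊, a₋⁆, c''⁆`. The relations
between the components of `A` and `B` kill the last two.
-/

section LieModule

variable {L M : Type*} [LieRing L] [AddCommGroup M] [LieRingModule L M]

/-- The obstruction `X` to the conservation of a generalised BIZZ current, in lightcone components:
`a` and `b` are the currents `A` and `B`, `p` and `q` two consecutive BIZZ currents, and `u` is a
potential. Since `p`, `q` and `u` lie in a Lie module, where only `L` can act from the left, the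
term `⁅u, ⁅a₊, a₋⁆⁆` of the adjoint case is encoded as `-⁅⁅a₊, a₋⁆, u⁆`. -/
def conservationObstruction (ap am bp bm : L) (pp pm qp qm u : M) : M :=
  ⁅ap, pm⁆ + ⁅am, pp⁆ + ⁅bp, qm⁆ - ⁅bm, qp⁆ - ⁅⁅ap, am⁆, u⁆

theorem conservationObstruction_adjoint (ap am bp bm pp pm qp qm u : L) :
    conservationObstruction ap am bp bm pp pm qp qm u =
      ⁅ap, pm⁆ + ⁅am, pp⁆ + ⁅bp, qm⁆ - ⁅bm, qp⁆ + ⁅u, ⁅ap, am⁆⁆ := by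
  rw [conservationObstruction, sub_eq_add_neg, lie_skew]

theorem conservationObstruction_next_currents (ap am bp bm : L) (pp pm qp qm c c' c'' : M) :
    conservationObstruction ap am bp bm
        (pp + ⁅ap, c⁆ + ⁅bp, c'⁆) (pm - ⁅am, c⁆ + ⁅bm, c'⁆)
        (qp + ⁅ap, c'⁆ + ⁅bp, c''⁆) (qm - ⁅am, c'⁆ + ⁅bm, c''⁆) c'' =
      conservationObstruction ap am bp bm pp pm qp qm c +
        ⁅⁅ap, bm⁆ - ⁅bp, am⁆, c'⁆ + ⁅⁅bp, bm⁆ - ⁅ap, am⁆, c''⁆ := by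
  calc
    _ = ⁅ap, pm⁆ + ⁅am, pp⁆ + ⁅bp, qm⁆ - ⁅bm, qp⁆
          - (⁅ap, ⁅am, c⁆⁆ - ⁅am, ⁅ap, c⁆⁆)
          + ((⁅ap, ⁅bm, c'⁆⁆ - ⁅bm, ⁅ap, c'⁆⁆) - (⁅bp, ⁅am, c'⁆⁆ - ⁅am, ⁅bp, c'⁆⁆))
          + ((⁅bp, ⁅bm, c''⁆⁆ - ⁅bm, ⁅bp, c''⁆⁆) - ⁅⁅ap, am⁆, c''⁆) := by
      simp only [conservationObstruction, lie_add, lie_sub]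
      abel
    _ = _ := by simp only [← lie_lie, ← sub_lie, conservationObstruction]

theorem X_recursion_general (ap am bp bm : L)
    (h_diag : ⁅ap, am⁆ = ⁅bp, bm⁆) (h_cross : ⁅ap, bm⁆ = ⁅bp, am⁆)
    (pp pm qp qm c c' c'' : M) :
    conservationObstruction ap am bp bm
        (pp + ⁅ap, c⁆ + ⁅bp, c'⁆) (pm - ⁅am, c⁆ + ⁅bm, c'⁆)
        (qp + ⁅ap, c'⁆ + ⁅bp, c''⁆) (qm - ⁅am, c'⁆ + ⁅bm, c''⁆) c'' =
      conservationObstruction ap am bp bm pp pm qp qm c := by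
  rw [conservationObstruction_next_currents, h_diag, h_cross, sub_self, sub_self, zero_lie,
    zero_lie, add_zero, add_zero]

end LieModule

/-- The recursion `X⁽ⁿ⁺¹⁾ = X⁽ⁿ⁻¹⁾` satisfied by the conservation obstructions of the
generalised BIZZ currents, in lightcone components. -/
theorem X_recursion
    {R : Type*} [CommRing R] {g : Type*} [LieRing g] [LieAlgebra R g]
    (ap am bp bm : g)
    (h1 : ⁅ap, am⁆ = ⁅bp, bm⁆)
    (h2 : ⁅ap, bm⁆ = ⁅bp, am⁆)
    (X : g → g → g → g → g → g)
    (hX : ∀ pp pm qp qm u, X pp pm qp qm u =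
      ⁅ap, pm⁆ + ⁅am, pp⁆ + ⁅bp, qm⁆ - ⁅bm, qp⁆ + ⁅u, ⁅ap, am⁆⁆)
    (pp pm qp qm c c' c'' : g)
    (rp rm sp sm : g)
    (hrp : rp = pp + ⁅ap, c⁆ + ⁅bp, c'⁆)
    (hrm : rm = pm - ⁅am, c⁆ + ⁅bm, c'⁆)
    (hsp : sp = qp + ⁅ap, c'⁆ + ⁅bp, c''⁆)
    (hsm : sm = qm - ⁅am, c'⁆ + ⁅bm, c''⁆) :
    X rp rm sp sm c'' = X pp pm qp qm c := by
  simp only [hX, ← conservationObstruction_adjoint, hrp, hrm, hsp, hsm]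
  exact X_recursion_general ap am bp bm h1 h2 pp pm qp qm c c' c''
end

section
/- Let g be a Lie algebra and let A₊, A₋, v₊, v₋, Δ₊, Δ₋ be elements of g satisfying the auxiliary-field equations of motion A₊ + v₊ + Δ₊ = 0 and A₋ + v₋ + Δ₋ = 0, together with the integrability conditions ⁅Δ₊, v₋⁆ = 0 and ⁅Δ₋, v₊⁆ = 0. Define B₊ := −(A₊ + 2·v₊) and B₋ := −(A₋ + 2·v₋). Then the fundamental commutator identities of auxiliary field sigma models hold: ⁅B₊, B₋⁆ = ⁅A₊, A₋⁆ and ⁅A₊, B₋⁆ = ⁅B₊, A₋⁆. -/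
/-!
The equations of motion say `A_± = -(Δ_± + v_±)`, hence `B_± = Δ_± - v_±`: passing from `A_±` to
`B_±` only flips the sign of `Δ_±`. Thus each identity compares two brackets that differ only in
their cross terms, with defect `2 • (⁅Δ₊, v₋⁆ ± ⁅v₊, Δ₋⁆)`, and integrability kills the cross terms.
-/

section EquationOfMotion

variable {G : Type*} [AddCommGroup G] {a v d : G}

lemma eq_neg_add_of_add_add_eq_zero (h : a + v + d = 0) : a = -(d + v) := by
  rw [add_comm d v]
  exact eq_neg_of_add_eq_zero_left (add_assoc a v d ▸ h)

lemma neg_add_two_nsmul_eq_sub_of_add_add_eq_zero (h : a + v + d = 0) :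
    -(a + 2 • v) = d - v := by
  rw [eq_neg_add_of_add_add_eq_zero h]
  abel

end EquationOfMotion

section Polarization

variable {L M : Type*} [LieRing L] [AddCommGroup M] [LieRingModule L M]

lemma lie_add_add_sub_lie_sub_sub (x y : L) (m n : M) :
    ⁅x + y, m + n⁆ - ⁅x - y, m - n⁆ = 2 • (⁅x, n⁆ + ⁅y, m⁆) := by
  simp only [add_lie, lie_add, sub_lie, lie_sub]
  abel

lemma lie_sub_add_sub_lie_add_sub (x y : L) (m n : M) :
    ⁅x - y, m + n⁆ - ⁅x + y, m - n⁆ = 2 • (⁅x, n⁆ - ⁅y, m⁆) := by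
  simpa only [← sub_eq_add_neg, sub_neg_eq_add, neg_lie] using
    lie_add_add_sub_lie_sub_sub x (-y) m n

end Polarization

/-- The fundamental commutator identities of auxiliary field sigma models follow from the
auxiliary-field equations of motion and the integrability conditions. -/
theorem afsm_commutator_identities
    {R : Type*} [CommRing R] {g : Type*} [LieRing g] [LieAlgebra R g]
    (Ap Am vp vm Dp Dm : g)
    (heomp : Ap + vp + Dp = 0)
    (heomm : Am + vm + Dm = 0)
    (hintp : ⁅Dp, vm⁆ = 0)
    (hintm : ⁅Dm, vp⁆ = 0) :
    ⁅-(Ap + 2 • vp), -(Am + 2 • vm)⁆ = ⁅Ap, Am⁆ ∧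
    ⁅Ap, -(Am + 2 • vm)⁆ = ⁅-(Ap + 2 • vp), Am⁆ := by
  have lie_vp_Dm : ⁅vp, Dm⁆ = 0 := by rw [← lie_skew, hintm, neg_zero]
  have lie_add_add : ⁅Dp + vp, Dm + vm⁆ = ⁅Dp - vp, Dm - vm⁆ := by
    rw [← sub_eq_zero, lie_add_add_sub_lie_sub_sub, hintp, lie_vp_Dm, add_zero, smul_zero]
  have lie_sub_add : ⁅Dp - vp, Dm + vm⁆ = ⁅Dp + vp, Dm - vm⁆ := by
    rw [← sub_eq_zero, lie_sub_add_sub_lie_add_sub, hintp, lie_vp_Dm, sub_zero, smul_zero]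
  rw [neg_add_two_nsmul_eq_sub_of_add_add_eq_zero heomp,
    neg_add_two_nsmul_eq_sub_of_add_add_eq_zero heomm,
    eq_neg_add_of_add_add_eq_zero heomp, eq_neg_add_of_add_add_eq_zero heomm]
  simp only [neg_lie, lie_neg, neg_neg, lie_add_add, lie_sub_add, and_self]
end

section
/- Let g be a Lie algebra over a commutative ring which decomposes as a direct sum of submodules g = h ⊕ m with ⁅h, h⁆ ⊆ h, ⁅h, m⁆ ⊆ m, and ⁅m, m⁆ ⊆ h. Let P : g → g be the linear projection onto m along h, let e : g → g be a Lie algebra automorphism, and set K := e ∘ P ∘ e⁻¹. Then for all x, y ∈ g: ⁅K x, K y⁆ = ⁅x, K y⁆ − K ⁅x, K y⁆. -/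
/-!
For `n ∈ m`, the map `⁅·, n⁆` is odd: it sends `h` into `m` and `m` into `h`. An odd map turns the
projection onto `m` into the projection onto `h`, so `⁅P x, n⁆ = (1 - P) ⁅x, n⁆`; take `n = P y`.
The resulting identity involves only the bracket and `P`, so it survives conjugation by an
automorphism.
-/

section Projection

variable {R M N : Type*} [Semiring R] [AddCommMonoid M] [Module R M] {h m : Submodule R M}
  {P : M →ₗ[R] M}

theorem isProj_of_codisjoint (hcodisj : Codisjoint h m) (hPm : ∀ x ∈ m, P x = x)
    (hPh : ∀ x ∈ h, P x = 0) : LinearMap.IsProj m P where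
  map_mem x := by
    obtain ⟨u, v, hu, hv, rfl⟩ := Submodule.codisjoint_iff_exists_add_eq.mp hcodisj x
    simpa [hPh u hu, hPm v hv] using hv
  map_id := hPm

theorem comp_proj_eq_sub_comp [AddCommGroup N] [Module R N] {Q : N →ₗ[R] N} {f : M →ₗ[R] N}
    (hcodisj : Codisjoint h m) (hPm : ∀ x ∈ m, P x = x) (hPh : ∀ x ∈ h, P x = 0)
    (hfh : ∀ x ∈ h, Q (f x) = f x) (hfm : ∀ x ∈ m, Q (f x) = 0) :
    f ∘ₗ P = f - Q ∘ₗ f :=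
  LinearMap.ext_on_codisjoint hcodisj
    (fun x hx ↦ by simp [hPh x hx, hfh x hx])
    (fun x hx ↦ by simp [hPm x hx, hfm x hx])

end Projection

section BilinearProduct

variable {R A : Type*} [CommSemiring R] [AddCommGroup A] [Module R A] {B : A →ₗ[R] A →ₗ[R] A}
  {P : A →ₗ[R] A}

theorem bilin_proj_proj_eq_sub {h m : Submodule R A} (hcodisj : Codisjoint h m)
    (hhm : ∀ x ∈ h, ∀ y ∈ m, B x y ∈ m) (hmm : ∀ x ∈ m, ∀ y ∈ m, B x y ∈ h)
    (hPm : ∀ x ∈ m, P x = x) (hPh : ∀ x ∈ h, P x = 0) (x y : A) :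
    B (P x) (P y) = B x (P y) - P (B x (P y)) := by
  have hy : P y ∈ m := (isProj_of_codisjoint hcodisj hPm hPh).map_mem y
  have hodd : B.flip (P y) ∘ₗ P = B.flip (P y) - P ∘ₗ B.flip (P y) :=
    comp_proj_eq_sub_comp hcodisj hPm hPh
      (fun u hu ↦ hPm _ (hhm u hu _ hy)) (fun v hv ↦ hPh _ (hmm v hv _ hy))
  exact LinearMap.congr_fun hodd x

theorem bilin_conj_eq_sub_of_bilin_eq_sub {e : A ≃ₗ[R] A} (he : ∀ x y, e (B x y) = B (e x) (e y))
    (hP : ∀ x y, B (P x) (P y) = B x (P y) - P (B x (P y))) (x y : A) :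
    B (e.conj P x) (e.conj P y) = B x (e.conj P y) - e.conj P (B x (e.conj P y)) := by
  obtain ⟨a, rfl⟩ := e.surjective x
  obtain ⟨b, rfl⟩ := e.surjective y
  simp only [LinearEquiv.conj_apply_apply, LinearEquiv.symm_apply_apply, ← he, hP, map_sub]

theorem K_map_bracket_general {h m : Submodule R A} (hcodisj : Codisjoint h m)
    (hhm : ∀ x ∈ h, ∀ y ∈ m, B x y ∈ m) (hmm : ∀ x ∈ m, ∀ y ∈ m, B x y ∈ h)
    (hPm : ∀ x ∈ m, P x = x) (hPh : ∀ x ∈ h, P x = 0)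
    {e : A ≃ₗ[R] A} (he : ∀ x y, e (B x y) = B (e x) (e y)) (x y : A) :
    B (e.conj P x) (e.conj P y) = B x (e.conj P y) - e.conj P (B x (e.conj P y)) :=
  bilin_conj_eq_sub_of_bilin_eq_sub he (bilin_proj_proj_eq_sub hcodisj hhm hmm hPm hPh) x y

end BilinearProduct

/-- The fundamental bracket identity of the K-map of a symmetric-space sigma model:
`⁅Kx, Ky⁆ = ⁅x, Ky⁆ − K⁅x, Ky⁆`, where `K = e ∘ P ∘ e⁻¹` for a Lie algebra
automorphism `e` and the projection `P` onto the coset part `m` along `h`. -/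
theorem K_map_bracket
    {R : Type*} [CommRing R] {g : Type*} [LieRing g] [LieAlgebra R g]
    (h m : Submodule R g) (hcompl : IsCompl h m)
    (hhh : ∀ x ∈ h, ∀ y ∈ h, ⁅x, y⁆ ∈ h)
    (hhm : ∀ x ∈ h, ∀ y ∈ m, ⁅x, y⁆ ∈ m)
    (hmm : ∀ x ∈ m, ∀ y ∈ m, ⁅x, y⁆ ∈ h)
    (P : g →ₗ[R] g)
    (hPm : ∀ x ∈ m, P x = x) (hPh : ∀ x ∈ h, P x = 0)
    (e : g ≃ₗ⁅R⁆ g) :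
    ∀ x y : g,
      ⁅e (P (e.symm x)), e (P (e.symm y))⁆
        = ⁅x, e (P (e.symm y))⁆ - e (P (e.symm ⁅x, e (P (e.symm y))⁆)) :=
  K_map_bracket_general (B := (LieAlgebra.ad R g : g →ₗ[R] Module.End R g))
    (e := e.toLinearEquiv) hcompl.codisjoint hhm hmm hPm hPh e.map_lie
end

section
/- Let g be a Lie algebra over a commutative ring which decomposes as a direct sum of submodules g = h ⊕ m with ⁅h, h⁆ ⊆ h, ⁅h, m⁆ ⊆ m, and ⁅m, m⁆ ⊆ h. Let P : g → g be the linear projection onto m along h, let e : g → g be a Lie algebra automorphism, and set K := e ∘ P ∘ e⁻¹. If x ∈ g satisfies K x = x, then for all y ∈ g: ⁅x, y⁆ = K ⁅x, y⁆ + ⁅x, K y⁆ (i.e. the adjoint map of x satisfies ad_x = K ∘ ad_x + ad_x ∘ K). -/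
/-!
For `x ∈ m`, the map `ad x` exchanges `h` and `m`. For any endomorphism `f` exchanging them, `P ∘ f`
is `f` on `h` and `0` on `m`, while `f ∘ P` is `0` on `h` and `f` on `m`, so the two add up to `f`.
If only `e⁻¹ x` lies in `m`, conjugating the identity for `ad (e⁻¹ x)` by `e` gives the one for
`ad x`, with `K = e ∘ P ∘ e⁻¹` in place of `P`.
-/

section Projection

variable {R M : Type*} [Semiring R] [AddCommMonoid M] [Module R M]
  {p q : Submodule R M} {P f : Module.End R M}

theorem isProj_of_codisjoint_s14 (hpq : Codisjoint p q)
    (hPp : ∀ x ∈ p, P x = 0) (hPq : ∀ x ∈ q, P x = x) : LinearMap.IsProj q P where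
  map_mem x := by
    obtain ⟨a, b, ha, hb, rfl⟩ := Submodule.codisjoint_iff_exists_add_eq.mp hpq x
    simpa [hPp a ha, hPq b hb] using hb
  map_id := hPq

theorem eq_proj_mul_add_mul_proj_of_mapsTo (hpq : Codisjoint p q)
    (hPp : ∀ x ∈ p, P x = 0) (hPq : ∀ x ∈ q, P x = x)
    (hfp : Set.MapsTo f p q) (hfq : Set.MapsTo f q p) : f = P * f + f * P := by
  refine LinearMap.ext_on_codisjoint hpq (fun x hx ↦ ?_) (fun x hx ↦ ?_)
  · simp [hPp x hx, hPq (f x) (hfp hx)]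
  · simp [hPq x hx, hPp (f x) (hfq hx)]

end Projection

section LieAlgebra

variable {R L : Type*} [CommRing R] [LieRing L] [LieAlgebra R L]
  {h m : Submodule R L} {P : Module.End R L}

theorem ad_eq_proj_mul_ad_add_ad_mul_proj (hcod : Codisjoint h m)
    (hhm : ∀ x ∈ h, ∀ y ∈ m, ⁅x, y⁆ ∈ m) (hmm : ∀ x ∈ m, ∀ y ∈ m, ⁅x, y⁆ ∈ h)
    (hPm : ∀ x ∈ m, P x = x) (hPh : ∀ x ∈ h, P x = 0) {x : L} (hx : x ∈ m) :
    LieAlgebra.ad R L x = P * LieAlgebra.ad R L x + LieAlgebra.ad R L x * P := by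
  have ad_h_m : Set.MapsTo (LieAlgebra.ad R L x) h m := fun y hy ↦ by
    simpa [lie_skew] using m.neg_mem (hhm y hy x hx)
  have ad_m_h : Set.MapsTo (LieAlgebra.ad R L x) m h := fun y hy ↦ hmm x hx y hy
  exact eq_proj_mul_add_mul_proj_of_mapsTo hcod hPh hPm ad_h_m ad_m_h

theorem K_map_ad_relation_general {L' : Type*} [LieRing L'] [LieAlgebra R L']
    (hcod : Codisjoint h m)
    (hhm : ∀ x ∈ h, ∀ y ∈ m, ⁅x, y⁆ ∈ m) (hmm : ∀ x ∈ m, ∀ y ∈ m, ⁅x, y⁆ ∈ h)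
    (hPm : ∀ x ∈ m, P x = x) (hPh : ∀ x ∈ h, P x = 0)
    (e : L ≃ₗ⁅R⁆ L') {x : L'} (hx : e.toLinearEquiv.conj P x = x) :
    LieAlgebra.ad R L' x = e.toLinearEquiv.conj P * LieAlgebra.ad R L' x +
      LieAlgebra.ad R L' x * e.toLinearEquiv.conj P := by
  obtain ⟨u, rfl⟩ : ∃ u, e u = x := e.surjective x
  have hPu : P u = u := e.injective <|
    calc e (P u) = e (P (e.symm (e u))) := by rw [e.symm_apply_apply]
      _ = e u := hx
  have hu : u ∈ m := (isProj_of_codisjoint_s14 hcod hPh hPm).mem_iff_map_id.mpr hPu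
  have ad_u := ad_eq_proj_mul_ad_add_ad_mul_proj hcod hhm hmm hPm hPh hu
  simpa only [map_add, Module.End.mul_eq_comp, LinearEquiv.conj_comp, LieAlgebra.conj_ad_apply]
    using congrArg e.toLinearEquiv.conj ad_u

end LieAlgebra

/-- The algebraic relation `ad_x = K ∘ ad_x + ad_x ∘ K` between the K-map of a
symmetric-space sigma model and any eigenvector `x` of `K` with eigenvalue `1`
(such as the Noether current `L`). -/
theorem K_map_ad_relation
    {R : Type*} [CommRing R] {g : Type*} [LieRing g] [LieAlgebra R g]
    (h m : Submodule R g) (hcompl : IsCompl h m)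
    (hhh : ∀ x ∈ h, ∀ y ∈ h, ⁅x, y⁆ ∈ h)
    (hhm : ∀ x ∈ h, ∀ y ∈ m, ⁅x, y⁆ ∈ m)
    (hmm : ∀ x ∈ m, ∀ y ∈ m, ⁅x, y⁆ ∈ h)
    (P : g →ₗ[R] g)
    (hPm : ∀ x ∈ m, P x = x) (hPh : ∀ x ∈ h, P x = 0)
    (e : g ≃ₗ⁅R⁆ g)
    (x : g) (hx : e (P (e.symm x)) = x) :
    ∀ y : g, ⁅x, y⁆ = e (P (e.symm ⁅x, y⁆)) + ⁅x, e (P (e.symm y))⁆ :=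
  LinearMap.congr_fun (K_map_ad_relation_general hcompl.codisjoint hhm hmm hPm hPh e hx)
end
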